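/- Every nonempty open connected subset of ℝⁿ = EuclideanSpace ℝ (Fin n) is orthogonally connected. -/

import Mathlib

noncomputable section

/-- A set `S ⊆ ℝⁿ` is *orthogonally connected* if any two of its points can be joined
by a polygonal path inside `S` all of whose segments are parallel to coordinate axes. -/
def OrthoConn {n : ℕ} (S : Set (EuclideanSpace ℝ (Fin n))) : Prop :=
  ∀ p ∈ S, ∀ q ∈ S, ∃ (k : ℕ) (x : ℕ → EuclideanSpace ℝ (Fin n)),
    x 0 = p ∧ x k = q ∧ ∀ j < k,
      segment ℝ (x j) (x (j + 1)) ⊆ S ∧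
      ∃ (i : Fin n) (c : ℝ), x (j + 1) - x j = c • EuclideanSpace.single i 1

/-!
Fix finitely many directions `v i` spanning the space. Being joined by a path inside `S` with
edges along the `v i` is an equivalence relation on `S`, so by connectedness it is enough that
each class is open. The linear map `f : c ↦ ∑ i, c i • v i` is continuous and open, so a small
cube around a preimage of `x ∈ S` is sent into `S` and onto a neighbourhood of `x`. Any two
points of the cube are joined inside it by changing one coordinate at a time, and `f` turns
these edges into edges along the `v i`.
-/

open Set Filter Topology Relation

theorem exists_seq_of_reflTransGen {α : Type*} {r : α → α → Prop} {a b : α}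
    (h : ReflTransGen r a b) :
    ∃ (k : ℕ) (x : ℕ → α), x 0 = a ∧ x k = b ∧ ∀ j < k, r (x j) (x (j + 1)) := by
  induction h using ReflTransGen.head_induction_on with
  | refl => exact ⟨0, fun _ ↦ b, rfl, rfl, by simp⟩
  | @head a _ hac _ ih =>
    obtain ⟨k, x, rfl, hk, hx⟩ := ih
    refine ⟨k + 1, fun j ↦ Nat.casesOn j a x, rfl, hk, ?_⟩
    rintro (_ | j) hj
    exacts [hac, hx j (Nat.lt_of_succ_lt_succ hj)]

/-- A single edge of a polygonal path inside `S` whose edges are parallel to the vectors `v i`.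
The whole edge has to lie in `S`; it may be degenerate, as `c = 0` is allowed. -/
def StepAlong {ι E : Type*} [AddCommGroup E] [Module ℝ E] (v : ι → E) (S : Set E)
    (a b : E) : Prop :=
  segment ℝ a b ⊆ S ∧ ∃ (i : ι) (c : ℝ), b - a = c • v i

namespace StepAlong

variable {ι E F : Type*} [AddCommGroup E] [Module ℝ E] [AddCommGroup F] [Module ℝ F]
  {v : ι → E} {S : Set E} {a b : E}

theorem symm (h : StepAlong v S a b) : StepAlong v S b a := by
  obtain ⟨hS, i, c, hc⟩ := h
  exact ⟨segment_symm ℝ a b ▸ hS, i, -c, by rw [neg_smul, ← hc, neg_sub]⟩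

instance : Std.Symm (StepAlong v S) := ⟨fun _ _ h ↦ h.symm⟩

theorem map {T : Set F} (h : StepAlong v S a b) (f : E →ₗ[ℝ] F) (hf : MapsTo f S T) :
    StepAlong (f ∘ v) T (f a) (f b) := by
  obtain ⟨hS, i, c, hc⟩ := h
  refine ⟨?_, i, c, by rw [← map_sub, hc, map_smul, Function.comp_apply]⟩
  have h_image : f '' segment ℝ a b = segment ℝ (f a) (f b) :=
    image_segment ℝ f.toAffineMap a b
  exact h_image ▸ (hf.mono_left hS).image_subset

end StepAlong

theorem stepAlong_update_of_convex {ι : Type*} [DecidableEq ι] {S : Set (ι → ℝ)}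
    (hS : Convex ℝ S) {a : ι → ℝ} {i : ι} {c : ℝ} (ha : a ∈ S)
    (hc : Function.update a i c ∈ S) :
    StepAlong (fun j ↦ Pi.single j 1) S a (Function.update a i c) := by
  refine ⟨hS.segment_subset ha hc, i, c - a i, ?_⟩
  ext j
  obtain rfl | hj := eq_or_ne j i <;> simp [*]

theorem reflTransGen_stepAlong_pi {ι : Type*} [Finite ι] [DecidableEq ι] {t : ι → Set ℝ}
    (ht : ∀ i, Convex ℝ (t i)) {a b : ι → ℝ} (ha : a ∈ univ.pi t) (hb : b ∈ univ.pi t) :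
    ReflTransGen (StepAlong (fun i ↦ Pi.single i 1) (univ.pi t)) a b := by
  cases nonempty_fintype ι
  have h_mem (s : Finset ι) : s.piecewise b a ∈ univ.pi t :=
    s.piecewise_mem_set_pi hb ha
  suffices h : ∀ s : Finset ι, ReflTransGen (StepAlong (fun i ↦ Pi.single i 1) (univ.pi t)) a
      (s.piecewise b a) by
    simpa using h Finset.univ
  intro s
  induction s using Finset.induction_on with
  | empty => rw [Finset.piecewise_empty]
  | insert i s _ ih =>
    have h_insert := h_mem (insert i s)
    rw [Finset.piecewise_insert] at h_insert ⊢
    exact ih.tail (stepAlong_update_of_convex (convex_pi fun i _ ↦ ht i) (h_mem s) h_insert)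

section SpanningFamily

variable {ι E : Type*} [Finite ι] [AddCommGroup E] [Module ℝ E] [TopologicalSpace E]
  [IsTopologicalAddGroup E] [ContinuousSMul ℝ E] [T2Space E] {v : ι → E} {S : Set E}

theorem eventually_reflTransGen_stepAlong (hv : Submodule.span ℝ (range v) = ⊤) {x : E}
    (hS : S ∈ 𝓝 x) : ∀ᶠ y in 𝓝 x, ReflTransGen (StepAlong v S) x y := by
  classical
  cases nonempty_fintype ι
  let f : (ι → ℝ) →ₗ[ℝ] E := Fintype.linearCombination ℝ v
  have hf_surj : Function.Surjective f := by
    rw [← LinearMap.range_eq_top, Fintype.range_linearCombination, hv]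
  have hf_single : f ∘ (fun i ↦ Pi.single i 1) = v := by
    ext i
    simp [f, Fintype.linearCombination_apply_single]
  have : FiniteDimensional ℝ E := .of_surjective f hf_surj
  obtain ⟨c, rfl⟩ := hf_surj x
  obtain ⟨r, hr, h_ball⟩ : ∃ r > 0, Metric.ball c r ⊆ f ⁻¹' S :=
    Metric.mem_nhds_iff.mp (f.continuous_of_finiteDimensional.continuousAt hS)
  filter_upwards [(f.isOpenMap_of_finiteDimensional hf_surj).image_mem_nhds
    (Metric.ball_mem_nhds c hr)]
  rintro _ ⟨d, hd, rfl⟩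
  have hc := Metric.mem_ball_self (x := c) hr
  rw [ball_pi c hr] at h_ball hc hd
  have h_cube := reflTransGen_stepAlong_pi (fun i ↦ convex_ball (c i) r) hc hd
  exact h_cube.lift f fun _ _ h ↦ hf_single ▸ h.map f h_ball

theorem reflTransGen_stepAlong_of_isPreconnected (hv : Submodule.span ℝ (range v) = ⊤)
    (hopen : IsOpen S) (hconn : IsPreconnected S) {p q : E} (hp : p ∈ S) (hq : q ∈ S) :
    ReflTransGen (StepAlong v S) p q :=
  hconn.induction₂ (ReflTransGen (StepAlong v S))
    (fun _ hx ↦ nhdsWithin_le_nhds (eventually_reflTransGen_stepAlong hv (hopen.mem_nhds hx)))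
    (fun _ _ _ _ _ _ ↦ .trans) (fun _ _ _ _ ↦ symm_of _) hp hq

theorem isOpen_isConnected_orthoConn_general (hv : Submodule.span ℝ (range v) = ⊤)
    (hopen : IsOpen S) (hconn : IsPreconnected S) {p q : E} (hp : p ∈ S) (hq : q ∈ S) :
    ∃ (k : ℕ) (x : ℕ → E), x 0 = p ∧ x k = q ∧ ∀ j < k, StepAlong v S (x j) (x (j + 1)) :=
  exists_seq_of_reflTransGen (reflTransGen_stepAlong_of_isPreconnected hv hopen hconn hp hq)

end SpanningFamily

theorem span_range_euclideanSpace_single (ι : Type*) [Finite ι] [DecidableEq ι] :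
    Submodule.span ℝ (range fun i : ι ↦ EuclideanSpace.single i (1 : ℝ)) = ⊤ := by
  cases nonempty_fintype ι
  have h_coe : ⇑(EuclideanSpace.basisFun ι ℝ).toBasis =
      fun i ↦ EuclideanSpace.single i (1 : ℝ) := by
    ext1 i
    rw [OrthonormalBasis.coe_toBasis, EuclideanSpace.basisFun_apply]
  exact h_coe ▸ (EuclideanSpace.basisFun ι ℝ).toBasis.span_eq

/-- Lemma: any nonempty open connected subset of `ℝⁿ` is orthogonally connected. -/
theorem isOpen_isConnected_orthoConn {n : ℕ} (S : Set (EuclideanSpace ℝ (Fin n)))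
    (hne : S.Nonempty) (hopen : IsOpen S) (hconn : IsConnected S) :
    OrthoConn S :=
  fun _ hp _ hq ↦ isOpen_isConnected_orthoConn_general
    (span_range_euclideanSpace_single (Fin n)) hopen hconn.isPreconnected hp hq
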